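/- For every x ∈ ℝ: K_Aiⁿ(x,x) > 0 for all integers n ≥ 1, and there is C > 0 such that for every integer n ≥ 1 and every y ∈ [−2·n^{2/3}, ∞) with |y| > |x| + 1: K_Aiⁿ(x,y)²/K_Aiⁿ(x,x) ≤ C·|y|^{−3/2}. -/

import Mathlib

open MeasureTheory Filter Set

noncomputable section

/-- The Airy function `Ai(x) = (1/π)·lim_{b→∞} ∫_0^b cos(t³/3 + x·t) dt`. -/
def Ai (x : ℝ) : ℝ :=
  (1 / Real.pi) *
    limUnder Filter.atTop (fun b : ℝ => ∫ t in (0:ℝ)..b, Real.cos (t ^ 3 / 3 + x * t))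

/-- The Airy kernel. -/
def KAi (x y : ℝ) : ℝ :=
  if x = y then (deriv Ai x) ^ 2 - x * (Ai x) ^ 2
  else (Ai x * deriv Ai y - deriv Ai x * Ai y) / (x - y)

/-- One-point correlation function of the Airy₂ random point field. -/
def rho (x : ℝ) : ℝ := (deriv Ai x) ^ 2 - x * (Ai x) ^ 2

/-- Probabilists' Hermite polynomial `Ĥ_m(x) = (−1)^m e^{x²/2} (d/dx)^m e^{−x²/2}`. -/
def hermiteP (m : ℕ) (x : ℝ) : ℝ :=
  (-1 : ℝ) ^ m * Real.exp (x ^ 2 / 2) * iteratedDeriv m (fun t => Real.exp (-t ^ 2 / 2)) x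

/-- Normalized oscillator function `φ_m`. -/
def osc (m : ℕ) (x : ℝ) : ℝ :=
  (2 * Real.pi) ^ (-(1:ℝ)/4) * ((m.factorial : ℝ)) ^ (-(1:ℝ)/2) *
    Real.exp (-x ^ 2 / 4) * hermiteP m x

/-- `ψ_mⁿ(x) = n^{1/12}·φ_m(2√n + n^{−1/6}·x)`. -/
def psiUp (n m : ℕ) (x : ℝ) : ℝ :=
  (n : ℝ) ^ ((1:ℝ)/12) * osc m (2 * Real.sqrt n + (n : ℝ) ^ (-(1:ℝ)/6) * x)

/-- `ψ_n = ψ_nⁿ`. -/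
def psiN (n : ℕ) : ℝ → ℝ := psiUp n n

/-- The finite-`n` Airy kernel. -/
def KAiN (n : ℕ) (x y : ℝ) : ℝ :=
  if x = y then
    (deriv (psiN n) x) ^ 2 - psiN n x * deriv (deriv (psiN n)) x
      - (1 / (2 * (n : ℝ) ^ ((1:ℝ)/3))) * (psiN n x) ^ 2
  else
    (psiN n x * deriv (psiN n) y - deriv (psiN n) x * psiN n y) / (x - y)
      - (1 / (2 * (n : ℝ) ^ ((1:ℝ)/3))) * (psiN n x * psiN n y)

/-- `(εf)(x) = (1/2)·∫_ℝ sign(x − y)·f(y) dy`. -/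
def epsF (f : ℝ → ℝ) (x : ℝ) : ℝ := (1/2) * ∫ y : ℝ, Real.sign (x - y) * f y

/-- `εψ_n`. -/
def epsPsi (n : ℕ) : ℝ → ℝ := epsF (psiN n)

/-- `J₁(x,y) = K_Ai(x,y) + (1/2)·Ai(x)·(1 − ∫_y^∞ Ai(u) du)`. -/
def J1 (x y : ℝ) : ℝ := KAi x y + (1/2) * Ai x * (1 - ∫ u in Set.Ioi y, Ai u)

/-- Scalar part of the quaternion product of Airy₁ kernels. -/
def L1 (x y : ℝ) : ℝ :=
  J1 x y * J1 y x -
    deriv (fun v => J1 x v) y * ((∫ u in x..y, J1 u x) - (1/2) * Real.sign (y - x))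

/-- `J₁ⁿ(x,y) = K_Aiⁿ(x,y) + (1/2)·ψ_{n−1}ⁿ(x)·(εψ_n)(y)`. -/
def J1N (n : ℕ) (x y : ℝ) : ℝ :=
  KAiN n x y + (1/2) * psiUp n (n - 1) x * epsPsi n y

/-- Scalar part of the quaternion product of finite-`n` Airy₁ kernels. -/
def L1N (n : ℕ) (x y : ℝ) : ℝ :=
  J1N n x y * J1N n y x -
    deriv (fun v => J1N n x v) y * ((∫ u in x..y, J1N n u x) - (1/2) * Real.sign (y - x))

/-- `ρ̂(x) = (1/π)·√(−x)` for `x < 0`, and `0` otherwise. -/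
def rhoHat (x : ℝ) : ℝ := if x < 0 then Real.sqrt (-x) / Real.pi else 0

/-- `ρ̂ⁿ(x) = (1/π)·√(−x·(1 + x/(4·n^{2/3})))` on `(−4n^{2/3}, 0)`, and `0` otherwise. -/
def rhoHatN (n : ℕ) (x : ℝ) : ℝ :=
  if -(4 * (n : ℝ) ^ ((2:ℝ)/3)) < x ∧ x < 0 then
    Real.sqrt (-x * (1 + x / (4 * (n : ℝ) ^ ((2:ℝ)/3)))) / Real.pi
  else 0

/-- `G_{a,b,c}(x,y) = |x|^{−a}·|y|^{−b}·|x−y|^{−c}`. -/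
def Gf (a b c : ℝ) (x y : ℝ) : ℝ := |x| ^ (-a) * |y| ^ (-b) * |x - y| ^ (-c)

/-- `Ĝ_{a,b,c}(x,y) = G_{a,b,c}(x,y) + G_{a,b,c}(y,x)`. -/
def Ghat (a b c : ℝ) (x y : ℝ) : ℝ := Gf a b c x y + Gf a b c y x

/-- Soft-edge one-point correlation function of the `n`-point GUE ensemble. -/
def rhoN (n : ℕ) (x : ℝ) : ℝ :=
  (deriv (psiN n) x) ^ 2 - (x ^ 2 / (4 * (n : ℝ) ^ ((2:ℝ)/3)) + x) * (psiN n x) ^ 2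

end

/-!
By the Christoffel–Darboux formula, `K_Aiⁿ(x,y)` is a positive multiple of
`∑_{k<n} φ_k(ξ) φ_k(η)`, so it is positive on the diagonal, and Cauchy–Schwarz gives
`K_Aiⁿ(x,y)² / K_Aiⁿ(x,x) ≤ K_Aiⁿ(y,y) ≤ E(y)`. Here `E = ψ_n'² - p ψ_n²` is the energy of `ψ_n`
as a solution of `ψ'' = p ψ` with `p(x) = x + x² / (4 n^{2/3}) - 1 / (2 n^{1/3})`.

To the right of the turning point `ψ_n` is recessive, and `E(y) = O(y⁻²)`. To the left the
first-order WKB adiabatic invariant is conserved up to a bounded factor, uniformly in `n`. Its value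
is known at `y = -2 n^{2/3}`, which corresponds to the origin of the oscillator, and this yields
`ψ_n(y)² = O(|y|^{-1/2})` and `ψ_n'(y)², E(y) = O(|y|^{1/2})` on `[-2 n^{2/3}, -1]`.

The growing bound on `E(y)` suffices only while `n`, hence `|y|`, is bounded. For large `n` one uses
the denominator `x - y` of the kernel instead: `K_Aiⁿ(x,y)²` is at most of the order of
`|y|^{-3/2} (ψ_n(x)² + ψ_n'(x)²)`, and `K_Aiⁿ(x,x)` is bounded below by a multiple of
`ψ_n(x)² + ψ_n'(x)²` depending only on `x`, because `E' = -p' ψ_n²` with `p' ≥ 1/2` near `x` and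
`E ≥ 0`.
-/

section Calculus

variable {F F' h h' : ℝ → ℝ} {a b : ℝ}

lemma le_of_hasDerivAt_nonpos (hab : a ≤ b) (hF : ∀ x ∈ Icc a b, HasDerivAt F (F' x) x)
    (hF' : ∀ x ∈ Icc a b, F' x ≤ 0) : F b ≤ F a :=
  antitoneOn_of_hasDerivWithinAt_nonpos (convex_Icc a b)
    (fun x hx => (hF x hx).continuousAt.continuousWithinAt)
    (fun x hx => (hF x (interior_subset hx)).hasDerivWithinAt)
    (fun x hx => hF' x (interior_subset hx)) (left_mem_Icc.2 hab) (right_mem_Icc.2 hab) hab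

lemma le_of_hasDerivAt_nonneg (hab : a ≤ b) (hF : ∀ x ∈ Icc a b, HasDerivAt F (F' x) x)
    (hF' : ∀ x ∈ Icc a b, 0 ≤ F' x) : F a ≤ F b :=
  monotoneOn_of_hasDerivWithinAt_nonneg (convex_Icc a b)
    (fun x hx => (hF x hx).continuousAt.continuousWithinAt)
    (fun x hx => (hF x (interior_subset hx)).hasDerivWithinAt)
    (fun x hx => hF' x (interior_subset hx)) (left_mem_Icc.2 hab) (right_mem_Icc.2 hab) hab

lemma le_exp_mul_of_hasDerivAt_le_mul (hab : a ≤ b)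
    (hF : ∀ x ∈ Icc a b, HasDerivAt F (F' x) x) (hh : ∀ x ∈ Icc a b, HasDerivAt h (h' x) x)
    (hle : ∀ x ∈ Icc a b, F' x ≤ h' x * F x) : F b ≤ Real.exp (h b - h a) * F a := by
  have hmono : F b * Real.exp (-h b) ≤ F a * Real.exp (-h a) :=
    le_of_hasDerivAt_nonpos (F := fun x => F x * Real.exp (-h x))
      (F' := fun x => (F' x - h' x * F x) * Real.exp (-h x)) hab
      (fun x hx => ((hF x hx).mul (hh x hx).neg.exp).congr_deriv
        (by simp only [Pi.neg_apply]; ring))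
      (fun x hx => mul_nonpos_of_nonpos_of_nonneg (sub_nonpos.2 (hle x hx)) (Real.exp_pos _).le)
  calc F b = F b * Real.exp (-h b) * Real.exp (h b) := by
        rw [mul_assoc, ← Real.exp_add, neg_add_cancel, Real.exp_zero, mul_one]
    _ ≤ F a * Real.exp (-h a) * Real.exp (h b) := by gcongr
    _ = Real.exp (h b - h a) * F a := by rw [mul_assoc, ← Real.exp_add]; ring_nf

end Calculus

lemma abs_mul_le_sq_add_sq (u v : ℝ) : |u * v| ≤ (u ^ 2 + v ^ 2) / 2 := by
  rw [abs_le]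
  constructor <;> linarith [sq_nonneg (u + v), sq_nonneg (u - v)]

lemma perturbed_quadratic_form_nonneg {q u v : ℝ} (hq : |q| ≤ 1 / 4) :
    0 ≤ u ^ 2 + 1 / 10 * v ^ 2 + q * u ^ 2 + 6 / 10 * q * (u * v) := by
  have hq2 : q ^ 2 ≤ 1 / 16 := by
    rw [← sq_abs]; nlinarith [abs_nonneg q]
  have hq1 : 0 ≤ 1 + q - 9 / 10 * q ^ 2 := by linarith [(abs_le.1 hq).1]
  calc 0 ≤ 1 / 10 * (v + 3 * q * u) ^ 2 + (1 + q - 9 / 10 * q ^ 2) * u ^ 2 := by positivity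
    _ = _ := by ring

/-- A solution of the one-dimensional Schrödinger equation `f'' = p f`, encoded as the first-order
system `f' = g`, `g' = p f` so that `g` is available without a choice of derivative. -/
structure IsSchrodingerSolution (p f g : ℝ → ℝ) : Prop where
  hasDerivAt_fst : ∀ x, HasDerivAt f (g x) x
  hasDerivAt_snd : ∀ x, HasDerivAt g (p x * f x) x

/-- The energy `g² - p f²` of a solution `(f, g)` of `f' = g`, `g' = p f`, in which only the
variation of `p` does work. -/
noncomputable def energy (p f g : ℝ → ℝ) (x : ℝ) : ℝ := g x ^ 2 - p x * f x ^ 2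

lemma energy_comp_affine (p f g : ℝ → ℝ) (c a b x : ℝ) :
    energy (fun x => a ^ 2 * p (b + a * x)) (fun x => c * f (b + a * x))
      (fun x => c * a * g (b + a * x)) x = (c * a) ^ 2 * energy p f g (b + a * x) := by
  rw [energy, energy]
  ring

namespace IsSchrodingerSolution

variable {p p' f g : ℝ → ℝ} {a b x y : ℝ}

lemma comp_affine (hs : IsSchrodingerSolution p f g) (c a b : ℝ) :
    IsSchrodingerSolution (fun x => a ^ 2 * p (b + a * x)) (fun x => c * f (b + a * x))
      (fun x => c * a * g (b + a * x)) where
  hasDerivAt_fst x := by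
    have haff : HasDerivAt (fun x => b + a * x) a x := by
      simpa using ((hasDerivAt_id' x).const_mul a).const_add b
    exact (((hs.hasDerivAt_fst _).comp x haff).const_mul c).congr_deriv (by ring)
  hasDerivAt_snd x := by
    have haff : HasDerivAt (fun x => b + a * x) a x := by
      simpa using ((hasDerivAt_id' x).const_mul a).const_add b
    exact (((hs.hasDerivAt_snd _).comp x haff).const_mul (c * a)).congr_deriv (by ring)

lemma hasDerivAt_fst_sq (hs : IsSchrodingerSolution p f g) (x : ℝ) :
    HasDerivAt (fun z => f z ^ 2) (2 * (f x * g x)) x :=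
  ((hs.hasDerivAt_fst x).pow 2).congr_deriv (by push_cast; ring)

lemma hasDerivAt_snd_sq (hs : IsSchrodingerSolution p f g) (x : ℝ) :
    HasDerivAt (fun z => g z ^ 2) (2 * p x * (f x * g x)) x :=
  ((hs.hasDerivAt_snd x).pow 2).congr_deriv (by push_cast; ring)

lemma hasDerivAt_mul (hs : IsSchrodingerSolution p f g) (x : ℝ) :
    HasDerivAt (fun z => f z * g z) (g x ^ 2 + p x * f x ^ 2) x :=
  ((hs.hasDerivAt_fst x).mul (hs.hasDerivAt_snd x)).congr_deriv (by ring)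

lemma hasDerivAt_energy (hs : IsSchrodingerSolution p f g) (hp : HasDerivAt p (p' x) x) :
    HasDerivAt (energy p f g) (-p' x * f x ^ 2) x :=
  ((hs.hasDerivAt_snd_sq x).sub (hp.mul (hs.hasDerivAt_fst_sq x))).congr_deriv (by ring)

lemma mul_nonpos_of_tendsto_zero (hs : IsSchrodingerSolution p f g) (hp : ∀ x, a ≤ x → 0 ≤ p x)
    (hf : Tendsto f atTop (nhds 0)) : f a * g a ≤ 0 := by
  by_contra! hpos
  have hfg : ∀ z, a ≤ z → f a * g a ≤ f z * g z := fun z hz =>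
    le_of_hasDerivAt_nonneg hz (fun x _ => hs.hasDerivAt_mul x) fun x hx => by
      have := hp x hx.1
      positivity
  have hsq : ∀ z, a ≤ z → f a ^ 2 ≤ f z ^ 2 := fun z hz =>
    le_of_hasDerivAt_nonneg hz (fun x _ => hs.hasDerivAt_fst_sq x) fun x hx => by
      linarith [hfg x hx.1]
  have hlim : Tendsto (fun z => f z ^ 2) atTop (nhds 0) := by simpa using hf.pow 2
  have hfa : f a ^ 2 ≤ 0 := ge_of_tendsto hlim ((eventually_ge_atTop a).mono hsq)
  simp [pow_eq_zero_iff two_ne_zero |>.1 (le_antisymm hfa (sq_nonneg _))] at hpos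

-- The left-hand side plus the nonnegative `-2 y f g + f²` is a decreasing function of `y`.
lemma sq_mul_energy_le (hs : IsSchrodingerSolution p f g) (ha : 0 ≤ a)
    (hp : ∀ x, a ≤ x → 0 ≤ p x) (hp' : ∀ x, a ≤ x → HasDerivAt p (p' x) x)
    (hp'_nonneg : ∀ x, a ≤ x → 0 ≤ p' x) (hf : Tendsto f atTop (nhds 0)) (hy : a ≤ y) :
    y ^ 2 * energy p f g y ≤ a ^ 2 * energy p f g a - 2 * a * (f a * g a) + f a ^ 2 := by
  have hfg : y * (f y * g y) ≤ 0 := mul_nonpos_of_nonneg_of_nonpos (ha.trans hy)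
    (hs.mul_nonpos_of_tendsto_zero (fun x hx => hp x (hy.trans hx)) hf)
  have hmono := le_of_hasDerivAt_nonpos
    (F := fun x => x ^ 2 * energy p f g x - 2 * x * (f x * g x) + f x ^ 2)
    (F' := fun x => -(4 * (x * p x * f x ^ 2) + x ^ 2 * p' x * f x ^ 2)) hy
    (fun x hx => by
      have hd := ((((hasDerivAt_id' x).pow 2).mul (hs.hasDerivAt_energy (hp' x hx.1))).sub
        (((hasDerivAt_id' x).const_mul 2).mul (hs.hasDerivAt_mul x))).add (hs.hasDerivAt_fst_sq x)
      refine hd.congr_deriv ?_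
      simp only [Pi.pow_apply, energy]
      ring)
    (fun x hx => by
      have := hp x hx.1
      have := hp'_nonneg x hx.1
      have : 0 ≤ x := ha.trans hx.1
      rw [neg_nonpos]
      positivity)
  linarith [sq_nonneg (f y)]

lemma sq_add_sq_le_exp_mul (hs : IsSchrodingerSolution p f g) {M : ℝ} (hab : a ≤ b)
    (hM : ∀ x ∈ Icc a b, |1 + p x| ≤ M) :
    f b ^ 2 + g b ^ 2 ≤ Real.exp (M * b - M * a) * (f a ^ 2 + g a ^ 2) := by
  refine le_exp_mul_of_hasDerivAt_le_mul (F := fun x => f x ^ 2 + g x ^ 2) hab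
    (fun x _ => (hs.hasDerivAt_fst_sq x).add (hs.hasDerivAt_snd_sq x))
    (fun x _ => (hasDerivAt_id' x).const_mul M) fun x hx => ?_
  calc 2 * (f x * g x) + 2 * p x * (f x * g x) = 2 * ((1 + p x) * (f x * g x)) := by ring
    _ ≤ 2 * (|1 + p x| * |f x * g x|) := by rw [← abs_mul]; gcongr; exact le_abs_self _
    _ ≤ 2 * (M * ((f x ^ 2 + g x ^ 2) / 2)) := by
      gcongr
      exacts [(abs_nonneg _).trans (hM x hx), hM x hx, abs_mul_le_sq_add_sq _ _]
    _ = M * 1 * (f x ^ 2 + g x ^ 2) := by ring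

-- Since `energy' = -p' f² ≤ -m f²`, the energy at `x` controls `∫ f²` over `[x, x + d]`; the
-- quadratic form is chosen so that its derivative is comparable to `-f²` while it vanishes at
-- `x + d`.
lemma quadratic_form_le_energy (hs : IsSchrodingerSolution p f g) {d m : ℝ} (hd : 0 ≤ d)
    (hp' : ∀ z ∈ Icc x (x + d), HasDerivAt p (p' z) z) (hm : 0 ≤ m)
    (hmp' : ∀ z ∈ Icc x (x + d), m ≤ p' z) (hp : ∀ z ∈ Icc x (x + d), d ^ 2 * |p z| ≤ 1 / 4)
    (hE : 0 ≤ energy p f g (x + d)) :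
    m / 2 * (d * f x ^ 2 + d ^ 2 * (f x * g x) + 3 / 10 * d ^ 3 * g x ^ 2) ≤
      energy p f g x := by
  have hmono := le_of_hasDerivAt_nonpos
    (F := fun z => energy p f g z - m / 2 * ((x + d - z) * f z ^ 2 +
        (x + d - z) ^ 2 * (f z * g z) + 3 / 10 * (x + d - z) ^ 3 * g z ^ 2))
    (F' := fun z => -p' z * f z ^ 2 - m / 2 * (-f z ^ 2 + 1 / 10 * ((x + d - z) * g z) ^ 2 +
        (x + d - z) ^ 2 * p z * f z ^ 2 +
        6 / 10 * ((x + d - z) ^ 2 * p z) * (f z * ((x + d - z) * g z))))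
    (le_add_of_nonneg_right hd)
    (fun z hz => by
      have ht : HasDerivAt (fun z => x + d - z) (-1) z := by
        simpa using (hasDerivAt_id' z).const_sub (x + d)
      have hd := (hs.hasDerivAt_energy (hp' z hz)).sub ((((ht.mul (hs.hasDerivAt_fst_sq z)).add
        ((ht.pow 2).mul (hs.hasDerivAt_mul z))).add
        (((ht.pow 3).const_mul (3 / 10)).mul (hs.hasDerivAt_snd_sq z))).const_mul (m / 2))
      refine hd.congr_deriv ?_
      push_cast
      simp only [Pi.pow_apply]
      ring)
    (fun z hz => by
      have hq : |(x + d - z) ^ 2 * p z| ≤ 1 / 4 := by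
        rw [abs_mul, abs_of_nonneg (sq_nonneg _)]
        refine le_trans ?_ (hp z hz)
        gcongr <;> linarith [hz.1, hz.2]
      have hform := mul_nonneg hm
        (perturbed_quadratic_form_nonneg (u := f z) (v := (x + d - z) * g z) hq)
      have hwork := mul_le_mul_of_nonneg_right (hmp' z hz) (sq_nonneg (f z))
      linarith)
  simp only [sub_self, add_sub_cancel_left] at hmono
  linarith

lemma sq_add_sq_le_energy (hs : IsSchrodingerSolution p f g) {d m : ℝ} (hd : 0 ≤ d) (hd1 : d ≤ 1)
    (hp' : ∀ z ∈ Icc x (x + d), HasDerivAt p (p' z) z) (hm : 0 ≤ m)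
    (hmp' : ∀ z ∈ Icc x (x + d), m ≤ p' z) (hp : ∀ z ∈ Icc x (x + d), d ^ 2 * |p z| ≤ 1 / 4)
    (hE : 0 ≤ energy p f g (x + d)) :
    m * d ^ 3 / 80 * (f x ^ 2 + g x ^ 2) ≤ energy p f g x := by
  refine le_trans ?_ (hs.quadratic_form_le_energy hd hp' hm hmp' hp hE)
  have hd3 : d ^ 3 * f x ^ 2 ≤ d * f x ^ 2 := by
    gcongr
    exact pow_le_of_le_one hd hd1 three_ne_zero
  have hf : 0 ≤ d * (3 / 10 * (d * g x + 5 / 3 * f x) ^ 2) := by positivity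
  have hg : 0 ≤ d * (f x + d * g x / 2) ^ 2 := by positivity
  have hf0 : 0 ≤ d * f x ^ 2 := by positivity
  have hform : d ^ 3 / 40 * (f x ^ 2 + g x ^ 2) ≤
      d * f x ^ 2 + d ^ 2 * (f x * g x) + 3 / 10 * d ^ 3 * g x ^ 2 := by
    linarith
  linarith [mul_le_mul_of_nonneg_left hform (div_nonneg hm zero_le_two)]

end IsSchrodingerSolution

/-- The local frequency `√(-p)` at which solutions of `f'' = p f` oscillate where `p < 0`. -/
noncomputable def frequency (p : ℝ → ℝ) (x : ℝ) : ℝ := √(-p x)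

/-- The action `energy / frequency` of a solution of `f'' = p f`, which is nearly conserved when
`p` varies slowly. -/
noncomputable def wkbAction (p f g : ℝ → ℝ) (x : ℝ) : ℝ :=
  g x ^ 2 / frequency p x + frequency p x * f x ^ 2

/-- The coefficient `ω' / ω²`, with `ω` the frequency of the potential `p` of derivative `p'`, of
the first-order term in the adiabatic invariant. -/
noncomputable def wkbCorrection (p p' : ℝ → ℝ) (x : ℝ) : ℝ := -p' x / (2 * frequency p x ^ 3)

/-- The first-order adiabatic invariant: the action, corrected by a multiple of `f g` which cancels
the leading part of its derivative. -/
noncomputable def wkbInvariant (p p' f g : ℝ → ℝ) (x : ℝ) : ℝ :=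
  wkbAction p f g x + wkbCorrection p p' x * (f x * g x)

section WKB

variable {p p' p'' f g : ℝ → ℝ} {x : ℝ}

lemma frequency_pos (hx : p x < 0) : 0 < frequency p x := Real.sqrt_pos.2 (neg_pos.2 hx)

lemma frequency_sq (hx : p x < 0) : frequency p x ^ 2 = -p x := Real.sq_sqrt (neg_pos.2 hx).le

lemma energy_eq_frequency_mul_wkbAction (hx : p x < 0) :
    energy p f g x = frequency p x * wkbAction p f g x := by
  have hω := frequency_pos hx
  calc energy p f g x = g x ^ 2 + frequency p x ^ 2 * f x ^ 2 := by
        rw [frequency_sq hx, energy]; ring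
    _ = frequency p x * wkbAction p f g x := by rw [wkbAction]; field_simp

lemma frequency_mul_sq_le_wkbAction : frequency p x * f x ^ 2 ≤ wkbAction p f g x :=
  le_add_of_nonneg_left (div_nonneg (sq_nonneg _) (Real.sqrt_nonneg _))

lemma abs_mul_le_wkbAction (hx : p x < 0) : |f x * g x| ≤ wkbAction p f g x / 2 := by
  have hω := frequency_pos hx
  have hsqrt := Real.sq_sqrt hω.le
  calc |f x * g x| = |√(frequency p x) * f x * (g x / √(frequency p x))| := by
        congr 1; field_simp
    _ ≤ ((√(frequency p x) * f x) ^ 2 + (g x / √(frequency p x)) ^ 2) / 2 :=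
        abs_mul_le_sq_add_sq _ _
    _ = wkbAction p f g x / 2 := by rw [mul_pow, div_pow, hsqrt, wkbAction, add_comm]

lemma wkbAction_le_wkbInvariant (hx : p x < 0) {θ : ℝ} (hθ : |wkbCorrection p p' x| ≤ θ) :
    (2 - θ) * wkbAction p f g x ≤ 2 * wkbInvariant p p' f g x := by
  have hcorr : |wkbCorrection p p' x * (f x * g x)| ≤ θ * (wkbAction p f g x / 2) := by
    rw [abs_mul]
    exact mul_le_mul hθ (abs_mul_le_wkbAction hx) (abs_nonneg _) ((abs_nonneg _).trans hθ)
  rw [wkbInvariant]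
  linarith [neg_abs_le (wkbCorrection p p' x * (f x * g x))]

lemma hasDerivAt_frequency (hp : HasDerivAt p (p' x) x) (hx : p x < 0) :
    HasDerivAt (frequency p) (-p' x / (2 * frequency p x)) x :=
  hp.neg.sqrt (neg_pos.2 hx).ne'

lemma hasDerivAt_wkbCorrection (hp : HasDerivAt p (p' x) x) (hp' : HasDerivAt p' (p'' x) x)
    (hx : p x < 0) :
    HasDerivAt (wkbCorrection p p')
      (-p'' x / (2 * frequency p x ^ 3) - 3 * p' x ^ 2 / (4 * frequency p x ^ 5)) x := by
  have hω := frequency_pos hx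
  have hd := hp'.neg.div (((hasDerivAt_frequency hp hx).pow 3).const_mul 2)
    (mul_pos two_pos (pow_pos hω 3)).ne'
  refine hd.congr_deriv ?_
  simp only [Pi.neg_apply, Pi.pow_apply]
  field_simp
  push_cast
  ring

namespace IsSchrodingerSolution

lemma hasDerivAt_wkbInvariant (hs : IsSchrodingerSolution p f g) {κ' : ℝ}
    (hp : HasDerivAt p (p' x) x) (hκ : HasDerivAt (wkbCorrection p p') κ' x) (hx : p x < 0) :
    HasDerivAt (wkbInvariant p p' f g) (κ' * (f x * g x)) x := by
  have hω := frequency_pos hx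
  have hp_eq : p x = -frequency p x ^ 2 := by rw [frequency_sq hx, neg_neg]
  have hdω := hasDerivAt_frequency hp hx
  have hd := (((hs.hasDerivAt_snd_sq x).div hdω hω.ne').add
    (hdω.mul (hs.hasDerivAt_fst_sq x))).add (hκ.mul (hs.hasDerivAt_mul x))
  refine hd.congr_deriv ?_
  rw [wkbCorrection, hp_eq]
  field_simp
  ring

lemma wkbAction_le (hs : IsSchrodingerSolution p f g) {a b θ : ℝ} {κ' h h' : ℝ → ℝ} (hab : a ≤ b)
    (hp : ∀ x ∈ Icc a b, HasDerivAt p (p' x) x) (hneg : ∀ x ∈ Icc a b, p x < 0)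
    (hκ : ∀ x ∈ Icc a b, HasDerivAt (wkbCorrection p p') (κ' x) x)
    (hκθ : ∀ x ∈ Icc a b, |wkbCorrection p p' x| ≤ θ) (hθ : θ < 2)
    (hh : ∀ x ∈ Icc a b, HasDerivAt h (h' x) x)
    (hκh : ∀ x ∈ Icc a b, |κ' x| ≤ (2 - θ) * h' x) :
    (2 - θ) * wkbAction p f g b ≤ 2 * (Real.exp (h b - h a) * wkbInvariant p p' f g a) := by
  refine (wkbAction_le_wkbInvariant (hneg b (right_mem_Icc.2 hab))
    (hκθ b (right_mem_Icc.2 hab))).trans (mul_le_mul_of_nonneg_left ?_ zero_le_two)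
  refine le_exp_mul_of_hasDerivAt_le_mul hab
    (fun x hx => hs.hasDerivAt_wkbInvariant (hp x hx) (hκ x hx) (hneg x hx)) hh fun x hx => ?_
  have hh' : 0 ≤ h' x :=
    nonneg_of_mul_nonneg_right ((abs_nonneg _).trans (hκh x hx)) (sub_pos.2 hθ)
  calc κ' x * (f x * g x) ≤ |κ' x| * |f x * g x| := by
        rw [← abs_mul]; exact le_abs_self _
    _ ≤ (2 - θ) * h' x * (wkbAction p f g x / 2) :=
        mul_le_mul (hκh x hx) (abs_mul_le_wkbAction (hneg x hx)) (abs_nonneg _)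
          ((abs_nonneg _).trans (hκh x hx))
    _ = h' x * ((2 - θ) * wkbAction p f g x / 2) := by ring
    _ ≤ h' x * wkbInvariant p p' f g x := by
        gcongr
        linarith [wkbAction_le_wkbInvariant (f := f) (g := g) (hneg x hx) (hκθ x hx)]

end IsSchrodingerSolution

end WKB

/-- The potential `x + x² / (4σ²) - 1 / (2σ)` of the rescaled oscillator `ψ_n'' = p ψ_n`, where
`σ = n^{1/3}`. -/
noncomputable def edgePotential (σ x : ℝ) : ℝ := x + x ^ 2 / (4 * σ ^ 2) - 1 / (2 * σ)

section EdgePotential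

variable {σ x y : ℝ} {f g : ℝ → ℝ}

lemma hasDerivAt_edgePotential (σ x : ℝ) :
    HasDerivAt (edgePotential σ) (1 + x / (2 * σ ^ 2)) x :=
  (((hasDerivAt_id' x).add (((hasDerivAt_id' x).pow 2).div_const (4 * σ ^ 2))).sub_const
    (1 / (2 * σ))).congr_deriv (by push_cast; ring)

lemma hasDerivAt_deriv_edgePotential (σ x : ℝ) :
    HasDerivAt (fun x => 1 + x / (2 * σ ^ 2)) (1 / (2 * σ ^ 2)) x :=
  ((hasDerivAt_id' x).div_const (2 * σ ^ 2)).const_add 1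

lemma one_div_two_mul_mem_Icc (hσ : 1 ≤ σ) : 1 / (2 * σ) ∈ Icc 0 (1 / 2) :=
  ⟨by positivity, one_div_le_one_div_of_le two_pos (by linarith)⟩

lemma abs_edgePotential_le (hσ : 1 ≤ σ) (x : ℝ) :
    |edgePotential σ x| ≤ x ^ 2 / 4 + |x| + 1 / 2 := by
  have hquad : x ^ 2 / (4 * σ ^ 2) ≤ x ^ 2 / 4 := by
    gcongr
    linarith [one_le_pow₀ hσ (n := 2)]
  have hquad_nonneg : 0 ≤ x ^ 2 / (4 * σ ^ 2) := by positivity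
  obtain ⟨hinv_nonneg, hinv⟩ := one_div_two_mul_mem_Icc hσ
  rw [edgePotential, abs_le]
  constructor <;> linarith [neg_abs_le x, le_abs_self x]

lemma edgePotential_nonneg (hσ : 1 ≤ σ) (hx : 1 ≤ x) : 0 ≤ edgePotential σ x := by
  have hquad : 0 ≤ x ^ 2 / (4 * σ ^ 2) := by positivity
  rw [edgePotential]
  linarith [(one_div_two_mul_mem_Icc hσ).2]

lemma half_neg_le_neg_edgePotential (hσ : 1 ≤ σ) (hx : -(2 * σ ^ 2) ≤ x) (hx0 : x ≤ 0) :
    -x / 2 ≤ -edgePotential σ x := by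
  have hquad : x ^ 2 / (4 * σ ^ 2) ≤ -x / 2 := by
    rw [div_le_iff₀ (by positivity)]
    linarith [mul_nonneg_of_nonpos_of_nonpos hx0 (by linarith : -(x + 2 * σ ^ 2) ≤ 0)]
  rw [edgePotential]
  linarith [(one_div_two_mul_mem_Icc hσ).1]

lemma neg_edgePotential_le (hσ : 1 ≤ σ) (hx1 : x ≤ -1) : -edgePotential σ x ≤ 2 * -x := by
  have hquad : 0 ≤ x ^ 2 / (4 * σ ^ 2) := by positivity
  rw [edgePotential]
  linarith [(one_div_two_mul_mem_Icc hσ).2]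

lemma edgePotential_neg (hσ : 1 ≤ σ) (hx : -(2 * σ ^ 2) ≤ x) (hx1 : x ≤ -1) :
    edgePotential σ x < 0 := by
  linarith [half_neg_le_neg_edgePotential hσ hx (by linarith)]

lemma half_neg_le_frequency_sq (hσ : 1 ≤ σ) (hx : -(2 * σ ^ 2) ≤ x) (hx1 : x ≤ -1) :
    -x / 2 ≤ frequency (edgePotential σ) x ^ 2 := by
  rw [frequency_sq (edgePotential_neg hσ hx hx1)]
  exact half_neg_le_neg_edgePotential hσ hx (by linarith)

lemma sqrt_neg_le_two_mul_frequency (hσ : 1 ≤ σ) (hx : -(2 * σ ^ 2) ≤ x) (hx1 : x ≤ -1) :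
    √(-x) ≤ 2 * frequency (edgePotential σ) x := by
  refine Real.sqrt_le_iff.2 ⟨mul_nonneg zero_le_two (Real.sqrt_nonneg _), ?_⟩
  linarith [half_neg_le_frequency_sq hσ hx hx1]

lemma frequency_le_two_mul_sqrt_neg (hσ : 1 ≤ σ) (hx1 : x ≤ -1) :
    frequency (edgePotential σ) x ≤ 2 * √(-x) := by
  refine Real.sqrt_le_iff.2 ⟨by positivity, ?_⟩
  rw [mul_pow, Real.sq_sqrt (by linarith)]
  linarith [neg_edgePotential_le hσ hx1]

lemma seven_tenths_le_frequency (hσ : 1 ≤ σ) (hx : -(2 * σ ^ 2) ≤ x) (hx1 : x ≤ -1) :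
    7 / 10 ≤ frequency (edgePotential σ) x :=
  Real.le_sqrt_of_sq_le (by
    linarith [half_neg_le_neg_edgePotential hσ hx (by linarith)])

lemma mul_neg_le_frequency_pow_three (hσ : 1 ≤ σ) (hx : -(2 * σ ^ 2) ≤ x) (hx1 : x ≤ -1) :
    7 / 20 * -x ≤ frequency (edgePotential σ) x ^ 3 := by
  have := mul_le_mul (seven_tenths_le_frequency hσ hx hx1) (half_neg_le_frequency_sq hσ hx hx1)
    (by linarith) (Real.sqrt_nonneg _)
  linarith

lemma mul_sq_le_frequency_pow_five (hσ : 1 ≤ σ) (hx : -(2 * σ ^ 2) ≤ x) (hx1 : x ≤ -1) :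
    7 / 40 * x ^ 2 ≤ frequency (edgePotential σ) x ^ 5 := by
  have := mul_le_mul (mul_neg_le_frequency_pow_three hσ hx hx1)
    (half_neg_le_frequency_sq hσ hx hx1) (by linarith) (pow_nonneg (Real.sqrt_nonneg _) 3)
  linarith

lemma deriv_edgePotential_mem_Icc (hσ : 1 ≤ σ) (hx : -(2 * σ ^ 2) ≤ x) (hx0 : x ≤ 0) :
    1 + x / (2 * σ ^ 2) ∈ Icc 0 1 := by
  have hlower : -1 ≤ x / (2 * σ ^ 2) := by
    rw [le_div_iff₀ (by positivity)]
    linarith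
  have hupper : x / (2 * σ ^ 2) ≤ 0 := div_nonpos_of_nonpos_of_nonneg hx0 (by positivity)
  exact ⟨by linarith, by linarith⟩

lemma abs_wkbCorrection_edgePotential_le (hσ : 1 ≤ σ) (hx : -(2 * σ ^ 2) ≤ x) (hx1 : x ≤ -1) :
    |wkbCorrection (edgePotential σ) (fun x => 1 + x / (2 * σ ^ 2)) x| ≤ 3 / 2 := by
  obtain ⟨hp'_nonneg, hp'_le⟩ := deriv_edgePotential_mem_Icc hσ hx (by linarith)
  have hω3 := mul_neg_le_frequency_pow_three hσ hx hx1
  rw [wkbCorrection, abs_div, abs_neg, abs_of_nonneg hp'_nonneg, abs_of_nonneg (by linarith),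
    div_le_iff₀ (by linarith)]
  linarith

lemma abs_deriv_wkbCorrection_edgePotential_le (hσ : 1 ≤ σ) (hx : -(2 * σ ^ 2) ≤ x)
    (hx1 : x ≤ -1) :
    |-(1 / (2 * σ ^ 2)) / (2 * frequency (edgePotential σ) x ^ 3) -
      3 * (1 + x / (2 * σ ^ 2)) ^ 2 / (4 * frequency (edgePotential σ) x ^ 5)| ≤ 6 / x ^ 2 := by
  obtain ⟨hp'_nonneg, hp'_le⟩ := deriv_edgePotential_mem_Icc hσ hx (by linarith)
  have hω3 := mul_neg_le_frequency_pow_three hσ hx hx1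
  have hω5 := mul_sq_le_frequency_pow_five hσ hx hx1
  have hω := frequency_pos (edgePotential_neg hσ hx hx1)
  have hx_pos : 0 < -x := by linarith
  have hcurvature : 1 / (2 * σ ^ 2) / (2 * frequency (edgePotential σ) x ^ 3) ≤
      1 / -x / (2 * (7 / 20 * -x)) := by
    gcongr
    linarith
  have hslope : 3 * (1 + x / (2 * σ ^ 2)) ^ 2 / (4 * frequency (edgePotential σ) x ^ 5) ≤
      3 * 1 ^ 2 / (4 * (7 / 40 * x ^ 2)) := by
    have : 0 < x ^ 2 := neg_sq x ▸ pow_pos hx_pos 2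
    gcongr
  have htotal : 1 / -x / (2 * (7 / 20 * -x)) + 3 * 1 ^ 2 / (4 * (7 / 40 * x ^ 2)) ≤
      6 / x ^ 2 := by
    have hsum : 1 / -x / (2 * (7 / 20 * -x)) + 3 * 1 ^ 2 / (4 * (7 / 40 * x ^ 2)) =
        40 / 7 / x ^ 2 := by
      have : x ≠ 0 := by linarith
      field_simp
      norm_num
    rw [hsum]
    gcongr
    norm_num
  rw [neg_div, ← neg_add', abs_neg, abs_of_nonneg (by positivity)]
  linarith

lemma wkbInvariant_edgePotential_le (hσ : 1 ≤ σ)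
    (hE : energy (edgePotential σ) f g (-(2 * σ ^ 2)) ≤ 4 * σ) :
    wkbInvariant (edgePotential σ) (fun x => 1 + x / (2 * σ ^ 2)) f g (-(2 * σ ^ 2)) ≤ 4 := by
  have hσ0 : 0 < σ := by linarith
  have hp : edgePotential σ (-(2 * σ ^ 2)) = -σ ^ 2 - 1 / (2 * σ) := by
    rw [edgePotential]
    field_simp
    ring
  have hp' : 1 + -(2 * σ ^ 2) / (2 * σ ^ 2) = 0 := by
    field_simp
    norm_num
  have hinv : 0 ≤ 1 / (2 * σ) := by positivity
  have hω : σ ≤ frequency (edgePotential σ) (-(2 * σ ^ 2)) :=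
    Real.le_sqrt_of_sq_le (by rw [hp]; linarith)
  rw [energy_eq_frequency_mul_wkbAction (by rw [hp]; linarith [pow_pos hσ0 2])] at hE
  rw [wkbInvariant, wkbCorrection, hp', neg_zero, zero_div, zero_mul, add_zero]
  by_contra! haction
  nlinarith [mul_lt_mul_of_pos_left haction (hσ0.trans_le hω)]

namespace IsSchrodingerSolution

lemma wkbAction_edgePotential_le (hs : IsSchrodingerSolution (edgePotential σ) f g) (hσ : 1 ≤ σ)
    (hE : energy (edgePotential σ) f g (-(2 * σ ^ 2)) ≤ 4 * σ) (hy : -(2 * σ ^ 2) ≤ y)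
    (hy1 : y ≤ -1) : wkbAction (edgePotential σ) f g y ≤ 16 * Real.exp 12 := by
  have hbound := hs.wkbAction_le (θ := 3 / 2) (h := fun x => -12 / x) (h' := fun x => 12 / x ^ 2)
    hy (fun x _ => hasDerivAt_edgePotential σ x)
    (fun x hx => edgePotential_neg hσ hx.1 (hx.2.trans hy1))
    (fun x hx => hasDerivAt_wkbCorrection (hasDerivAt_edgePotential σ x)
      (p'' := fun _ => 1 / (2 * σ ^ 2)) (hasDerivAt_deriv_edgePotential σ x)
      (edgePotential_neg hσ hx.1 (hx.2.trans hy1)))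
    (fun x hx => abs_wkbCorrection_edgePotential_le hσ hx.1 (hx.2.trans hy1)) (by norm_num)
    (fun x hx => ((hasDerivAt_inv (by linarith [hx.2] : x ≠ 0)).const_mul (-12)).congr_deriv
      (by ring))
    (fun x hx => (abs_deriv_wkbCorrection_edgePotential_le hσ hx.1 (hx.2.trans hy1)).trans_eq
      (by ring))
  have hexponent : -12 / y - -12 / -(2 * σ ^ 2) ≤ 12 := by
    have hleft : 0 ≤ -12 / -(2 * σ ^ 2) := by
      rw [neg_div_neg_eq]
      positivity
    refine (sub_le_self _ hleft).trans ?_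
    rw [div_le_iff_of_neg (by linarith)]
    linarith
  have hmul : Real.exp (-12 / y - -12 / -(2 * σ ^ 2)) *
      wkbInvariant (edgePotential σ) (fun x => 1 + x / (2 * σ ^ 2)) f g (-(2 * σ ^ 2)) ≤
      Real.exp 12 * 4 := by
    refine (mul_le_mul_of_nonneg_left (wkbInvariant_edgePotential_le hσ hE)
      (Real.exp_pos _).le).trans ?_
    gcongr
  linarith

lemma sq_mul_sqrt_neg_le (hs : IsSchrodingerSolution (edgePotential σ) f g) (hσ : 1 ≤ σ)
    (hE : energy (edgePotential σ) f g (-(2 * σ ^ 2)) ≤ 4 * σ) (hy : -(2 * σ ^ 2) ≤ y)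
    (hy1 : y ≤ -1) : √(-y) * f y ^ 2 ≤ 32 * Real.exp 12 :=
  calc √(-y) * f y ^ 2 ≤ 2 * frequency (edgePotential σ) y * f y ^ 2 := by
        gcongr
        exact sqrt_neg_le_two_mul_frequency hσ hy hy1
    _ = 2 * (frequency (edgePotential σ) y * f y ^ 2) := by ring
    _ ≤ 2 * (16 * Real.exp 12) := by
        refine mul_le_mul_of_nonneg_left ?_ zero_le_two
        exact frequency_mul_sq_le_wkbAction.trans (hs.wkbAction_edgePotential_le hσ hE hy hy1)
    _ = 32 * Real.exp 12 := by ring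

lemma energy_le_mul_sqrt_neg (hs : IsSchrodingerSolution (edgePotential σ) f g) (hσ : 1 ≤ σ)
    (hE : energy (edgePotential σ) f g (-(2 * σ ^ 2)) ≤ 4 * σ) (hy : -(2 * σ ^ 2) ≤ y)
    (hy1 : y ≤ -1) : energy (edgePotential σ) f g y ≤ 32 * Real.exp 12 * √(-y) :=
  calc energy (edgePotential σ) f g y
      = frequency (edgePotential σ) y * wkbAction (edgePotential σ) f g y :=
        energy_eq_frequency_mul_wkbAction (edgePotential_neg hσ hy hy1)
    _ ≤ 2 * √(-y) * (16 * Real.exp 12) :=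
        mul_le_mul (frequency_le_two_mul_sqrt_neg hσ hy1)
          (hs.wkbAction_edgePotential_le hσ hE hy hy1) (by unfold wkbAction frequency; positivity)
          (by positivity)
    _ = 32 * Real.exp 12 * √(-y) := by ring

lemma snd_sq_le_mul_sqrt_neg (hs : IsSchrodingerSolution (edgePotential σ) f g) (hσ : 1 ≤ σ)
    (hE : energy (edgePotential σ) f g (-(2 * σ ^ 2)) ≤ 4 * σ) (hy : -(2 * σ ^ 2) ≤ y)
    (hy1 : y ≤ -1) : g y ^ 2 ≤ 32 * Real.exp 12 * √(-y) := by
  have henergy := hs.energy_le_mul_sqrt_neg hσ hE hy hy1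
  have := mul_nonpos_of_nonpos_of_nonneg (edgePotential_neg hσ hy hy1).le (sq_nonneg (f y))
  rw [energy] at henergy
  linarith

lemma sq_add_sq_one_le (hs : IsSchrodingerSolution (edgePotential σ) f g) (hσ : 1 ≤ σ)
    (hE : energy (edgePotential σ) f g (-(2 * σ ^ 2)) ≤ 4 * σ) :
    f 1 ^ 2 + g 1 ^ 2 ≤ 64 * Real.exp 18 := by
  have hleft : -(2 * σ ^ 2) ≤ -1 := by linarith [one_le_pow₀ hσ (n := 2)]
  have hf : f (-1) ^ 2 ≤ 32 * Real.exp 12 := by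
    simpa using hs.sq_mul_sqrt_neg_le hσ hE hleft le_rfl
  have hg : g (-1) ^ 2 ≤ 32 * Real.exp 12 := by
    simpa using hs.snd_sq_le_mul_sqrt_neg hσ hE hleft le_rfl
  calc f 1 ^ 2 + g 1 ^ 2 ≤ Real.exp (3 * 1 - 3 * -1) * (f (-1) ^ 2 + g (-1) ^ 2) := by
        refine hs.sq_add_sq_le_exp_mul (by norm_num) fun z hz => ?_
        have hz1 : |z| ≤ 1 := abs_le.2 hz
        have hz2 : z ^ 2 ≤ 1 := (sq_le_one_iff_abs_le_one z).2 hz1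
        have := abs_add_le 1 (edgePotential σ z)
        rw [abs_one] at this
        linarith [abs_edgePotential_le hσ z]
    _ ≤ Real.exp 6 * (64 * Real.exp 12) := by
        norm_num only
        gcongr
        linarith
    _ = 64 * Real.exp 18 := by
        rw [mul_left_comm, ← Real.exp_add]
        norm_num

lemma sq_mul_energy_edgePotential_le (hs : IsSchrodingerSolution (edgePotential σ) f g)
    (hσ : 1 ≤ σ) (hf : Tendsto f atTop (nhds 0))
    (hE : energy (edgePotential σ) f g (-(2 * σ ^ 2)) ≤ 4 * σ) (hy : 1 ≤ y) :
    y ^ 2 * energy (edgePotential σ) f g y ≤ 128 * Real.exp 18 := by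
  have hdecay := hs.sq_mul_energy_le zero_le_one (fun x hx => edgePotential_nonneg hσ hx)
    (fun x _ => hasDerivAt_edgePotential σ x) (fun x (hx : 1 ≤ x) => by positivity) hf hy
  have henergy : energy (edgePotential σ) f g 1 ≤ g 1 ^ 2 :=
    sub_le_self _ (mul_nonneg (edgePotential_nonneg hσ le_rfl) (sq_nonneg _))
  have hfg := abs_mul_le_sq_add_sq (f 1) (g 1)
  linarith [hs.sq_add_sq_one_le hσ hE, neg_abs_le (f 1 * g 1)]

lemma sq_add_sq_le_energy_edgePotential (hs : IsSchrodingerSolution (edgePotential σ) f g)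
    (hσ : 1 ≤ σ) (hx : |x| ≤ σ ^ 2) (hE : ∀ z, 0 ≤ energy (edgePotential σ) f g z) :
    1 / (1280 * (|x| + 2) ^ 3) * (f x ^ 2 + g x ^ 2) ≤ energy (edgePotential σ) f g x := by
  set d := 1 / (2 * (|x| + 2)) with hd
  have hd0 : 0 ≤ d := by positivity
  have hd1 : d ≤ 1 := (div_le_one (by positivity)).2 (by linarith [abs_nonneg x])
  have hconst : 1 / (1280 * (|x| + 2) ^ 3) = 1 / 2 * d ^ 3 / 80 := by
    rw [hd]
    field_simp
    norm_num
  rw [hconst]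
  refine hs.sq_add_sq_le_energy hd0 hd1 (fun z _ => hasDerivAt_edgePotential σ z)
    one_half_pos.le (fun z hz => ?_) (fun z hz => ?_) (hE _)
  · have : -1 / 2 ≤ z / (2 * σ ^ 2) := by
      rw [le_div_iff₀ (by positivity)]
      linarith [hz.1, neg_abs_le x]
    linarith
  · have hz : |z| ≤ |x| + 1 :=
      abs_le.2 ⟨by linarith [hz.1, neg_abs_le x], by linarith [hz.2, le_abs_self x]⟩
    have hpz : |edgePotential σ z| ≤ (|x| + 2) ^ 2 := by
      have := pow_le_pow_left₀ (abs_nonneg z) hz 2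
      rw [sq_abs] at this
      linarith [abs_edgePotential_le hσ z, abs_nonneg x, sq_nonneg |x|]
    calc d ^ 2 * |edgePotential σ z| ≤ d ^ 2 * (|x| + 2) ^ 2 := by gcongr
      _ = 1 / 4 := by
        rw [hd]
        field_simp
        norm_num

end IsSchrodingerSolution

end EdgePotential

section Oscillator

lemma hermiteP_eq_aeval (m : ℕ) (x : ℝ) :
    hermiteP m x = Polynomial.aeval x (Polynomial.hermite m) := by
  have hgauss : (fun t : ℝ => Real.exp (-t ^ 2 / 2)) = fun t => Real.exp (-(t ^ 2 / 2)) := by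
    simp only [neg_div]
  rw [Polynomial.hermite_eq_deriv_gaussian', hermiteP, iteratedDeriv_eq_iterate, hgauss]
  ring

lemma derivative_hermite_succ (n : ℕ) :
    Polynomial.derivative (Polynomial.hermite (n + 1)) =
      ((n : Polynomial ℤ) + 1) * Polynomial.hermite n := by
  induction n with
  | zero => simp
  | succ n ih =>
    rw [Polynomial.hermite_succ (n + 1), Polynomial.derivative_sub, Polynomial.derivative_mul, ih]
    simp only [Polynomial.derivative_X, Polynomial.derivative_mul, Polynomial.derivative_add,
      Polynomial.derivative_natCast, Polynomial.derivative_one]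
    rw [Polynomial.hermite_succ n]
    push_cast
    ring

lemma hasDerivAt_hermiteP (n : ℕ) (x : ℝ) :
    HasDerivAt (hermiteP n) (x * hermiteP n x - hermiteP (n + 1) x) x := by
  rw [funext (hermiteP_eq_aeval n)]
  refine (Polynomial.hasDerivAt_aeval _ _).congr_deriv ?_
  rw [hermiteP_eq_aeval, Polynomial.hermite_succ]
  simp

lemma hermiteP_add_two (n : ℕ) (x : ℝ) :
    hermiteP (n + 2) x = x * hermiteP (n + 1) x - (n + 1) * hermiteP n x := by
  rw [hermiteP_eq_aeval, hermiteP_eq_aeval, hermiteP_eq_aeval, Polynomial.hermite_succ (n + 1),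
    derivative_hermite_succ]
  simp

/-- The constant `(2π)^{-1/4} (m!)^{-1/2}` which normalizes `osc m` in `L²`. -/
noncomputable def oscConst (m : ℕ) : ℝ :=
  (2 * Real.pi) ^ (-(1 : ℝ) / 4) * ((m.factorial : ℝ)) ^ (-(1 : ℝ) / 2)

lemma osc_eq (m : ℕ) (x : ℝ) :
    osc m x = oscConst m * Real.exp (-x ^ 2 / 4) * hermiteP m x := rfl

lemma sqrt_mul_oscConst_succ (m : ℕ) : √(m + 1) * oscConst (m + 1) = oscConst m := by
  have hm : (0 : ℝ) < m + 1 := by positivity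
  have hcancel : √((m : ℝ) + 1) * ((m : ℝ) + 1) ^ (-(1 : ℝ) / 2) = 1 := by
    rw [Real.sqrt_eq_rpow, ← Real.rpow_add hm]
    norm_num
  rw [oscConst, oscConst, Nat.factorial_succ, Nat.cast_mul, Nat.cast_succ,
    Real.mul_rpow hm.le (by positivity)]
  linear_combination (2 * Real.pi) ^ (-(1 : ℝ) / 4) * (m.factorial : ℝ) ^ (-(1 : ℝ) / 2) * hcancel

lemma osc_zero_eq (x : ℝ) : osc 0 x = oscConst 0 * Real.exp (-x ^ 2 / 4) := by
  simp [osc_eq, hermiteP_eq_aeval]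

lemma osc_zero_pos (x : ℝ) : 0 < osc 0 x := by
  rw [osc_zero_eq, oscConst]
  positivity

lemma osc_one_eq (x : ℝ) : osc 1 x = x * osc 0 x := by
  have hconst : oscConst 1 = oscConst 0 := by simpa using sqrt_mul_oscConst_succ 0
  rw [osc_zero_eq, osc_eq, hermiteP_eq_aeval, Polynomial.hermite_one, Polynomial.aeval_X, hconst]
  ring

lemma sqrt_mul_osc_add_two (n : ℕ) (x : ℝ) :
    √(n + 2) * osc (n + 2) x = x * osc (n + 1) x - √(n + 1) * osc n x := by
  have hconst₁ := sqrt_mul_oscConst_succ n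
  have hconst₂ : √(n + 2) * oscConst (n + 2) = oscConst (n + 1) := by
    simpa [add_assoc, one_add_one_eq_two] using sqrt_mul_oscConst_succ (n + 1)
  have hsqrt : √((n : ℝ) + 1) ^ 2 = n + 1 := Real.sq_sqrt (by positivity)
  rw [osc_eq, osc_eq, osc_eq, hermiteP_add_two]
  linear_combination Real.exp (-x ^ 2 / 4) * (x * hermiteP (n + 1) x -
    (n + 1) * hermiteP n x) * hconst₂ + oscConst (n + 1) * Real.exp (-x ^ 2 / 4) *
    hermiteP n x * hsqrt - √(n + 1) * Real.exp (-x ^ 2 / 4) * hermiteP n x * hconst₁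

lemma hasDerivAt_osc (n : ℕ) (x : ℝ) :
    HasDerivAt (osc n) (x / 2 * osc n x - √(n + 1) * osc (n + 1) x) x := by
  have hgauss : HasDerivAt (fun x : ℝ => Real.exp (-x ^ 2 / 4))
      (-x / 2 * Real.exp (-x ^ 2 / 4)) x :=
    (((hasDerivAt_id' x).pow 2).neg.div_const 4).exp.congr_deriv (by
      simp only [Pi.neg_apply, Pi.pow_apply]
      push_cast
      ring)
  refine ((hgauss.const_mul (oscConst n)).mul (hasDerivAt_hermiteP n x)).congr_deriv ?_
  rw [osc_eq, osc_eq]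
  linear_combination Real.exp (-x ^ 2 / 4) * hermiteP (n + 1) x * sqrt_mul_oscConst_succ n

lemma deriv_osc (n : ℕ) (x : ℝ) :
    deriv (osc n) x = x / 2 * osc n x - √(n + 1) * osc (n + 1) x :=
  (hasDerivAt_osc n x).deriv

lemma deriv_osc_zero (x : ℝ) : deriv (osc 0) x = -x / 2 * osc 0 x := by
  rw [deriv_osc, osc_one_eq, Nat.cast_zero, zero_add, Real.sqrt_one]
  ring

lemma deriv_osc_succ (n : ℕ) (x : ℝ) :
    deriv (osc (n + 1)) x = √(n + 1) * osc n x - x / 2 * osc (n + 1) x := by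
  rw [deriv_osc, Nat.cast_succ, add_assoc, one_add_one_eq_two]
  linear_combination -sqrt_mul_osc_add_two n x

lemma isSchrodingerSolution_osc (n : ℕ) :
    IsSchrodingerSolution (fun x => x ^ 2 / 4 - n - 1 / 2) (osc n) (deriv (osc n)) where
  hasDerivAt_fst x := (hasDerivAt_osc n x).differentiableAt.hasDerivAt
  hasDerivAt_snd x := by
    have hd := (((hasDerivAt_id' x).div_const 2).mul (hasDerivAt_osc n x)).sub
      ((hasDerivAt_osc (n + 1) x).differentiableAt.hasDerivAt.const_mul √(n + 1))
    rw [funext (deriv_osc n)]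
    refine hd.congr_deriv ?_
    have hsqrt : √((n : ℝ) + 1) ^ 2 = n + 1 := Real.sq_sqrt (by positivity)
    rw [deriv_osc_succ]
    linear_combination -osc n x * hsqrt

theorem christoffel_darboux_osc_self (n : ℕ) (x : ℝ) :
    deriv (osc n) x ^ 2 - (x ^ 2 / 4 - n) * osc n x ^ 2 = ∑ k ∈ Finset.range n, osc k x ^ 2 := by
  induction n with
  | zero =>
    rw [Finset.sum_range_zero, deriv_osc_zero, Nat.cast_zero]
    ring
  | succ n ih =>
    have hsqrt : √((n : ℝ) + 1) ^ 2 = n + 1 := Real.sq_sqrt (by positivity)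
    rw [Finset.sum_range_succ, ← ih, deriv_osc_succ, deriv_osc, Nat.cast_succ]
    linear_combination (osc n x ^ 2 - osc (n + 1) x ^ 2) * hsqrt

theorem christoffel_darboux_osc (n : ℕ) (x y : ℝ) :
    osc n x * deriv (osc n) y - deriv (osc n) x * osc n y - (x - y) / 2 * (osc n x * osc n y) =
      (x - y) * ∑ k ∈ Finset.range n, osc k x * osc k y := by
  induction n with
  | zero =>
    rw [Finset.sum_range_zero, deriv_osc_zero, deriv_osc_zero]
    ring
  | succ n ih =>
    rw [Finset.sum_range_succ, mul_add, ← ih, deriv_osc_succ, deriv_osc_succ, deriv_osc, deriv_osc]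
    ring

lemma tendsto_osc_atTop (n : ℕ) : Tendsto (osc n) atTop (nhds 0) := by
  have hlim := (Polynomial.tendsto_div_exp_atTop
    ((Polynomial.hermite n).map (algebraMap ℤ ℝ))).abs.const_mul |oscConst n|
  simp only [abs_zero, mul_zero] at hlim
  refine squeeze_zero_norm' ?_ hlim
  filter_upwards [eventually_ge_atTop 4] with x hx
  have hexp : Real.exp (-x ^ 2 / 4) ≤ Real.exp (-x) :=
    Real.exp_le_exp.2 (by linarith [mul_nonneg (by linarith : 0 ≤ x) (by linarith : 0 ≤ x - 4)])
  calc ‖osc n x‖ = |oscConst n| * (|hermiteP n x| * Real.exp (-x ^ 2 / 4)) := by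
        rw [osc_eq, Real.norm_eq_abs, abs_mul, abs_mul, Real.abs_exp]
        ring
    _ ≤ |oscConst n| * (|hermiteP n x| * Real.exp (-x)) := by gcongr
    _ = _ := by
        rw [hermiteP_eq_aeval, Polynomial.eval_map_algebraMap, abs_div, Real.abs_exp, Real.exp_neg,
          div_eq_mul_inv]

lemma osc_zero_zero_le_one : osc 0 0 ≤ 1 := by
  have hconst : oscConst 0 ≤ 1 := by
    simpa [oscConst] using Real.rpow_le_one_of_one_le_of_nonpos
      (by linarith [Real.pi_gt_three] : 1 ≤ 2 * Real.pi) (by norm_num : -(1 : ℝ) / 4 ≤ 0)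
  simpa [osc_zero_eq] using hconst

lemma mul_osc_add_two_zero_sq (n : ℕ) :
    ((n : ℝ) + 2) * osc (n + 2) 0 ^ 2 = (n + 1) * osc n 0 ^ 2 := by
  have hrec := congrArg (· ^ 2) (sqrt_mul_osc_add_two n 0)
  simp only [zero_mul, zero_sub, neg_sq, mul_pow] at hrec
  rwa [Real.sq_sqrt (by positivity), Real.sq_sqrt (by positivity)] at hrec

lemma osc_zero_pow_four_mul_le_one (n : ℕ) : osc n 0 ^ 4 * (n + 1) ≤ 1 := by
  induction n using Nat.twoStepInduction with
  | zero => simpa using pow_le_one₀ (osc_zero_pos 0).le osc_zero_zero_le_one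
  | one => simp [osc_one_eq]
  | more n ih _ =>
    push_cast
    refine le_of_mul_le_mul_left ?_ (by positivity : 0 < ((n : ℝ) + 2) ^ 2)
    calc ((n : ℝ) + 2) ^ 2 * (osc (n + 2) 0 ^ 4 * (n + 2 + 1))
        = (((n : ℝ) + 2) * osc (n + 2) 0 ^ 2) ^ 2 * (n + 3) := by ring
      _ = (n + 1) * (n + 3) * (osc n 0 ^ 4 * (n + 1)) := by rw [mul_osc_add_two_zero_sq]; ring
      _ ≤ (n + 1) * (n + 3) * 1 := by gcongr
      _ ≤ (n + 2) ^ 2 * 1 := by linarith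

lemma mul_osc_zero_sq_le_sqrt (n : ℕ) : (n + 1) * osc n 0 ^ 2 ≤ √(n + 1) := by
  refine Real.le_sqrt_of_sq_le ?_
  calc (((n : ℝ) + 1) * osc n 0 ^ 2) ^ 2 = ((n : ℝ) + 1) * (osc n 0 ^ 4 * (n + 1)) := by ring
    _ ≤ ((n : ℝ) + 1) * 1 := by gcongr; exact osc_zero_pow_four_mul_le_one n
    _ = n + 1 := mul_one _

lemma energy_osc_zero_le {n : ℕ} (hn : 1 ≤ n) :
    energy (fun x => x ^ 2 / 4 - n - 1 / 2) (osc n) (deriv (osc n)) 0 ≤ 4 * √n := by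
  have hn' : (1 : ℝ) ≤ n := by exact_mod_cast hn
  have hsqrt : ∀ t : ℝ, t ≤ 4 * n → √t ≤ 2 * √n := fun t ht => by
    refine Real.sqrt_le_iff.2 ⟨by positivity, ?_⟩
    rw [mul_pow, Real.sq_sqrt (by positivity)]
    linarith
  have hsucc := mul_osc_zero_sq_le_sqrt (n + 1)
  push_cast at hsucc
  have hderiv : deriv (osc n) 0 ^ 2 = (n + 1) * osc (n + 1) 0 ^ 2 := by
    rw [deriv_osc, zero_div, zero_mul, zero_sub, neg_sq, mul_pow, Real.sq_sqrt (by positivity)]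
  rw [energy, hderiv]
  linarith [mul_osc_zero_sq_le_sqrt n, hsqrt (n + 1) (by linarith),
    hsqrt (n + 1 + 1) (by linarith), sq_nonneg (osc n 0), sq_nonneg (osc (n + 1) 0)]

end Oscillator

/-- The soft-edge coordinate `2√n + n^{-1/6} x` at which `ψ_n(x)` samples the oscillator. -/
noncomputable def edgeScale (n : ℕ) (x : ℝ) : ℝ := 2 * √n + (n : ℝ) ^ (-(1 : ℝ) / 6) * x

section Rescaling

variable {n : ℕ}

lemma exists_twelfth_root {r : ℝ} (hr : 1 ≤ r) :
    ∃ t, 1 ≤ t ∧ r ^ ((1 : ℝ) / 12) = t ∧ r ^ (-(1 : ℝ) / 6) = (t ^ 2)⁻¹ ∧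
      r ^ ((1 : ℝ) / 3) = t ^ 4 ∧ √r = t ^ 6 ∧ r = t ^ 12 := by
  have hr0 : 0 ≤ r := zero_le_one.trans hr
  have hpow : ∀ k : ℕ, (r ^ ((1 : ℝ) / 12)) ^ k = r ^ ((k : ℝ) / 12) := fun k => by
    rw [← Real.rpow_natCast, ← Real.rpow_mul hr0]
    ring_nf
  refine ⟨r ^ ((1 : ℝ) / 12), Real.one_le_rpow hr (by norm_num), rfl, ?_, ?_, ?_, ?_⟩
  · rw [hpow, ← Real.rpow_neg hr0]
    norm_num
  · rw [hpow]
    norm_num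
  · rw [hpow, Real.sqrt_eq_rpow]
    norm_num
  · rw [hpow]
    norm_num

lemma psiN_eq (n : ℕ) (x : ℝ) : psiN n x = (n : ℝ) ^ ((1 : ℝ) / 12) * osc n (edgeScale n x) := rfl

lemma edgePotential_eq_sq_mul (hn : 1 ≤ n) :
    edgePotential ((n : ℝ) ^ ((1 : ℝ) / 3)) =
      fun x => ((n : ℝ) ^ (-(1 : ℝ) / 6)) ^ 2 * (edgeScale n x ^ 2 / 4 - n - 1 / 2) := by
  obtain ⟨t, ht, -, hinv, hσ, hsqrt, hn12⟩ :=
    exists_twelfth_root (Nat.one_le_cast.2 hn : (1 : ℝ) ≤ n)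
  funext x
  rw [edgePotential, edgeScale, hinv, hσ, hsqrt]
  nth_rw 1 [hn12]
  field_simp
  ring

lemma hasDerivAt_psiN (n : ℕ) (x : ℝ) : HasDerivAt (psiN n)
    ((n : ℝ) ^ ((1 : ℝ) / 12) * (n : ℝ) ^ (-(1 : ℝ) / 6) * deriv (osc n) (edgeScale n x)) x :=
  ((isSchrodingerSolution_osc n).comp_affine _ _ _).hasDerivAt_fst x

lemma deriv_psiN (n : ℕ) : deriv (psiN n) =
    fun x => (n : ℝ) ^ ((1 : ℝ) / 12) * (n : ℝ) ^ (-(1 : ℝ) / 6) * deriv (osc n) (edgeScale n x) :=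
  funext fun x => (hasDerivAt_psiN n x).deriv

lemma isSchrodingerSolution_psiN (hn : 1 ≤ n) :
    IsSchrodingerSolution (edgePotential ((n : ℝ) ^ ((1 : ℝ) / 3))) (psiN n) (deriv (psiN n)) := by
  rw [edgePotential_eq_sq_mul hn, deriv_psiN]
  exact (isSchrodingerSolution_osc n).comp_affine _ _ _

lemma energy_psiN (hn : 1 ≤ n) (x : ℝ) :
    energy (edgePotential ((n : ℝ) ^ ((1 : ℝ) / 3))) (psiN n) (deriv (psiN n)) x =
      (n : ℝ) ^ (-(1 : ℝ) / 6) *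
        energy (fun x => x ^ 2 / 4 - n - 1 / 2) (osc n) (deriv (osc n)) (edgeScale n x) := by
  obtain ⟨t, ht, hpref, hinv, -⟩ := exists_twelfth_root (Nat.one_le_cast.2 hn : (1 : ℝ) ≤ n)
  have hscale : ((n : ℝ) ^ ((1 : ℝ) / 12) * (n : ℝ) ^ (-(1 : ℝ) / 6)) ^ 2 =
      (n : ℝ) ^ (-(1 : ℝ) / 6) := by
    rw [hpref, hinv]
    field_simp
  rw [edgePotential_eq_sq_mul hn, deriv_psiN]
  exact (energy_comp_affine (fun x => x ^ 2 / 4 - n - 1 / 2) (osc n) (deriv (osc n)) _ _ (2 * √n)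
    x).trans (congrArg (· * _) hscale)

lemma tendsto_psiN_atTop (hn : 1 ≤ n) : Tendsto (psiN n) atTop (nhds 0) := by
  have hscale : Tendsto (edgeScale n) atTop atTop :=
    tendsto_atTop_add_const_left _ _ (tendsto_id.const_mul_atTop (by positivity))
  have hlim := ((tendsto_osc_atTop n).comp hscale).const_mul ((n : ℝ) ^ ((1 : ℝ) / 12))
  rwa [mul_zero] at hlim

lemma energy_psiN_center_le (hn : 1 ≤ n) :
    energy (edgePotential ((n : ℝ) ^ ((1 : ℝ) / 3))) (psiN n) (deriv (psiN n))
      (-(2 * ((n : ℝ) ^ ((1 : ℝ) / 3)) ^ 2)) ≤ 4 * (n : ℝ) ^ ((1 : ℝ) / 3) := by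
  obtain ⟨t, ht, -, hinv, hσ, hsqrt, -⟩ := exists_twelfth_root (Nat.one_le_cast.2 hn : (1 : ℝ) ≤ n)
  have hcenter : edgeScale n (-(2 * ((n : ℝ) ^ ((1 : ℝ) / 3)) ^ 2)) = 0 := by
    rw [edgeScale, hinv, hσ, hsqrt]
    field_simp
    ring
  rw [energy_psiN hn, hcenter]
  calc (n : ℝ) ^ (-(1 : ℝ) / 6) * energy (fun x => x ^ 2 / 4 - n - 1 / 2) (osc n) (deriv (osc n)) 0
      ≤ (n : ℝ) ^ (-(1 : ℝ) / 6) * (4 * √n) := by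
        gcongr
        exact energy_osc_zero_le hn
    _ = 4 * (n : ℝ) ^ ((1 : ℝ) / 3) := by
        rw [hinv, hσ, hsqrt]
        field_simp

lemma KAiN_self (hn : 1 ≤ n) (x : ℝ) :
    KAiN n x x = energy (edgePotential ((n : ℝ) ^ ((1 : ℝ) / 3))) (psiN n) (deriv (psiN n)) x -
      1 / (2 * (n : ℝ) ^ ((1 : ℝ) / 3)) * psiN n x ^ 2 := by
  rw [KAiN, if_pos rfl, ((isSchrodingerSolution_psiN hn).hasDerivAt_snd x).deriv, energy]
  ring

lemma KAiN_eq_sum (hn : 1 ≤ n) (x y : ℝ) :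
    KAiN n x y = (n : ℝ) ^ (-(1 : ℝ) / 6) *
      ∑ k ∈ Finset.range n, osc k (edgeScale n x) * osc k (edgeScale n y) := by
  obtain ⟨t, ht, hpref, hinv, hσ, -⟩ := exists_twelfth_root (Nat.one_le_cast.2 hn : (1 : ℝ) ≤ n)
  obtain rfl | hxy := eq_or_ne x y
  · simp only [← sq, ← christoffel_darboux_osc_self]
    rw [KAiN_self hn, energy_psiN hn, energy, psiN_eq, hpref, hinv, hσ]
    field_simp
    ring
  · have hxy' : x - y ≠ 0 := sub_ne_zero.2 hxy
    have hsub : edgeScale n x - edgeScale n y = (t ^ 2)⁻¹ * (x - y) := by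
      rw [edgeScale, edgeScale, hinv]
      ring
    have hsum := christoffel_darboux_osc n (edgeScale n x) (edgeScale n y)
    rw [hsub] at hsum
    refine mul_left_cancel₀ hxy' ?_
    rw [mul_left_comm, hinv, ← mul_assoc, ← hsum, KAiN, if_neg hxy,
      deriv_psiN, psiN_eq, psiN_eq, hpref, hinv, hσ]
    field_simp

lemma KAiN_self_pos (hn : 1 ≤ n) (x : ℝ) : 0 < KAiN n x x := by
  rw [KAiN_eq_sum hn]
  refine mul_pos (by positivity) (Finset.sum_pos' (fun k _ => mul_self_nonneg _) ?_)
  exact ⟨0, Finset.mem_range.2 hn, mul_pos (osc_zero_pos _) (osc_zero_pos _)⟩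

lemma KAiN_sq_le_mul (hn : 1 ≤ n) (x y : ℝ) : KAiN n x y ^ 2 ≤ KAiN n x x * KAiN n y y := by
  rw [KAiN_eq_sum hn, KAiN_eq_sum hn, KAiN_eq_sum hn, mul_pow, mul_mul_mul_comm, ← sq]
  gcongr
  simpa only [sq] using Finset.sum_mul_sq_le_sq_mul_sq (Finset.range n)
    (fun k => osc k (edgeScale n x)) (fun k => osc k (edgeScale n y))

lemma KAiN_self_le_energy (hn : 1 ≤ n) (x : ℝ) :
    KAiN n x x ≤ energy (edgePotential ((n : ℝ) ^ ((1 : ℝ) / 3))) (psiN n) (deriv (psiN n)) x := by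
  rw [KAiN_self hn]
  exact sub_le_self _ (by positivity)

lemma energy_psiN_nonneg (hn : 1 ≤ n) (x : ℝ) :
    0 ≤ energy (edgePotential ((n : ℝ) ^ ((1 : ℝ) / 3))) (psiN n) (deriv (psiN n)) x :=
  (KAiN_self_pos hn x).le.trans (KAiN_self_le_energy hn x)

lemma KAiN_sq_div_le_energy (hn : 1 ≤ n) (x y : ℝ) :
    KAiN n x y ^ 2 / KAiN n x x ≤
      energy (edgePotential ((n : ℝ) ^ ((1 : ℝ) / 3))) (psiN n) (deriv (psiN n)) y := by
  refine le_trans ?_ (KAiN_self_le_energy hn y)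
  rw [div_le_iff₀' (KAiN_self_pos hn x)]
  exact KAiN_sq_le_mul hn x y

end Rescaling

section KernelDecay

variable {n : ℕ} {x y : ℝ}

lemma sqrt_eq_sq_mul_rpow {w : ℝ} (hw : 0 < w) : √w = w ^ 2 * w ^ (-(3 : ℝ) / 2) := by
  rw [Real.sqrt_eq_rpow, ← Real.rpow_natCast, ← Real.rpow_add hw]
  norm_num

lemma sqrt_mul_mul_rpow {w : ℝ} (hw : 0 < w) : √w * (w * w ^ (-(3 : ℝ) / 2)) = 1 := by
  have hself := Real.mul_self_sqrt hw.le
  rw [sqrt_eq_sq_mul_rpow hw] at hself ⊢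
  refine mul_left_cancel₀ hw.ne' ?_
  linear_combination hself

lemma one_le_rpow_third (hn : 1 ≤ n) : 1 ≤ (n : ℝ) ^ ((1 : ℝ) / 3) :=
  Real.one_le_rpow (Nat.one_le_cast.2 hn) (by norm_num)

lemma psiN_sq_le (hn : 1 ≤ n) (hy : -(2 * ((n : ℝ) ^ ((1 : ℝ) / 3)) ^ 2) ≤ y) (hy1 : y ≤ -1) :
    psiN n y ^ 2 ≤ 32 * Real.exp 12 * (-y * (-y) ^ (-(3 : ℝ) / 2)) := by
  have hy0 : 0 < -y := by linarith
  refine le_of_mul_le_mul_left ?_ (Real.sqrt_pos.2 hy0)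
  rw [mul_left_comm, sqrt_mul_mul_rpow hy0, mul_one]
  exact (isSchrodingerSolution_psiN hn).sq_mul_sqrt_neg_le (one_le_rpow_third hn)
    (energy_psiN_center_le hn) hy hy1

lemma deriv_psiN_sq_le (hn : 1 ≤ n) (hy : -(2 * ((n : ℝ) ^ ((1 : ℝ) / 3)) ^ 2) ≤ y) (hy1 : y ≤ -1) :
    deriv (psiN n) y ^ 2 ≤ 32 * Real.exp 12 * ((-y) ^ 2 * (-y) ^ (-(3 : ℝ) / 2)) := by
  rw [← sqrt_eq_sq_mul_rpow (by linarith)]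
  exact (isSchrodingerSolution_psiN hn).snd_sq_le_mul_sqrt_neg (one_le_rpow_third hn)
    (energy_psiN_center_le hn) hy hy1

lemma KAiN_sq_div_le_of_one_le (hn : 1 ≤ n) (x : ℝ) (hy : 1 ≤ y) :
    KAiN n x y ^ 2 / KAiN n x x ≤ 128 * Real.exp 18 * y ^ (-(3 : ℝ) / 2) := by
  have hy0 : 0 < y := by linarith
  have hdecay : 1 ≤ y ^ 2 * y ^ (-(3 : ℝ) / 2) := by
    rw [← sqrt_eq_sq_mul_rpow hy0]
    exact Real.one_le_sqrt.2 hy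
  refine (KAiN_sq_div_le_energy hn x y).trans (le_of_mul_le_mul_left ?_ (pow_pos hy0 2))
  calc y ^ 2 * energy (edgePotential ((n : ℝ) ^ ((1 : ℝ) / 3))) (psiN n) (deriv (psiN n)) y
      ≤ 128 * Real.exp 18 * 1 := by
        rw [mul_one]
        exact (isSchrodingerSolution_psiN hn).sq_mul_energy_edgePotential_le (one_le_rpow_third hn)
          (tendsto_psiN_atTop hn) (energy_psiN_center_le hn) hy
    _ ≤ 128 * Real.exp 18 * (y ^ 2 * y ^ (-(3 : ℝ) / 2)) := by gcongr
    _ = y ^ 2 * (128 * Real.exp 18 * y ^ (-(3 : ℝ) / 2)) := by ring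

lemma KAiN_sq_div_le_of_rpow_le {T : ℝ} (hn : 1 ≤ n) (hT : (n : ℝ) ^ ((1 : ℝ) / 3) ≤ T) (x : ℝ)
    (hy : -(2 * ((n : ℝ) ^ ((1 : ℝ) / 3)) ^ 2) ≤ y) (hy1 : y ≤ -1) :
    KAiN n x y ^ 2 / KAiN n x x ≤ 128 * Real.exp 12 * T ^ 4 * (-y) ^ (-(3 : ℝ) / 2) := by
  have hy0 : 0 < -y := by linarith
  have hyT : -y ≤ 2 * T ^ 2 :=
    calc -y ≤ 2 * ((n : ℝ) ^ ((1 : ℝ) / 3)) ^ 2 := by linarith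
      _ ≤ 2 * T ^ 2 := by gcongr
  calc KAiN n x y ^ 2 / KAiN n x x
      ≤ energy (edgePotential ((n : ℝ) ^ ((1 : ℝ) / 3))) (psiN n) (deriv (psiN n)) y :=
        KAiN_sq_div_le_energy hn x y
    _ ≤ 32 * Real.exp 12 * ((-y) ^ 2 * (-y) ^ (-(3 : ℝ) / 2)) := by
        rw [← sqrt_eq_sq_mul_rpow hy0]
        exact (isSchrodingerSolution_psiN hn).energy_le_mul_sqrt_neg (one_le_rpow_third hn)
          (energy_psiN_center_le hn) hy hy1
    _ ≤ 32 * Real.exp 12 * ((2 * T ^ 2) ^ 2 * (-y) ^ (-(3 : ℝ) / 2)) := by gcongr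
    _ = 128 * Real.exp 12 * T ^ 4 * (-y) ^ (-(3 : ℝ) / 2) := by ring

lemma KAiN_sq_le (n : ℕ) (hxy : x ≠ y) :
    KAiN n x y ^ 2 ≤ 2 * (psiN n x ^ 2 + deriv (psiN n) x ^ 2) *
      ((psiN n y ^ 2 + deriv (psiN n) y ^ 2) / (x - y) ^ 2 +
        psiN n y ^ 2 / (2 * (n : ℝ) ^ ((1 : ℝ) / 3)) ^ 2) := by
  rw [KAiN, if_neg hxy]
  set f := psiN n
  set g := deriv (psiN n)
  set s := 2 * (n : ℝ) ^ ((1 : ℝ) / 3)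
  have hwronskian : ((f x * g y - g x * f y) / (x - y)) ^ 2 ≤
      (f x ^ 2 + g x ^ 2) * ((f y ^ 2 + g y ^ 2) / (x - y) ^ 2) := by
    rw [div_pow, mul_div_assoc']
    gcongr
    linarith [sq_nonneg (f x * f y + g x * g y)]
  have hproduct : (1 / s * f x * f y) ^ 2 ≤ (f x ^ 2 + g x ^ 2) * (f y ^ 2 / s ^ 2) :=
    calc (1 / s * f x * f y) ^ 2 = f x ^ 2 * (f y ^ 2 / s ^ 2) := by ring
      _ ≤ (f x ^ 2 + g x ^ 2) * (f y ^ 2 / s ^ 2) := by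
        gcongr
        exact le_add_of_nonneg_right (sq_nonneg _)
  linarith [sq_nonneg ((f x * g y - g x * f y) / (x - y) + 1 / s * f x * f y)]

lemma neg_le_mul_sub (hxy : |x| + 1 ≤ -y) : -y ≤ (|x| + 1) * (x - y) := by
  have hprod : 0 ≤ |x| * (-y - (|x| + 1)) := mul_nonneg (abs_nonneg x) (by linarith)
  have hdist : (|x| + 1) * (-y - |x|) ≤ (|x| + 1) * (x - y) :=
    mul_le_mul_of_nonneg_left (by linarith [neg_abs_le x]) (by positivity)
  linarith

lemma KAiN_sq_le_of_lt_neg (hn : 1 ≤ n) (hy : -(2 * ((n : ℝ) ^ ((1 : ℝ) / 3)) ^ 2) ≤ y)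
    (hxy : |x| + 1 < -y) :
    KAiN n x y ^ 2 ≤ 160 * Real.exp 12 * (|x| + 1) ^ 2 * (-y) ^ (-(3 : ℝ) / 2) *
      (psiN n x ^ 2 + deriv (psiN n) x ^ 2) := by
  have hx0 := abs_nonneg x
  have hy1 : y ≤ -1 := by linarith
  have hy0 : 0 < -y := by linarith
  have hsub : 0 < x - y := by linarith [neg_abs_le x]
  have hW : 0 < (-y) ^ (-(3 : ℝ) / 2) := Real.rpow_pos_of_pos hy0 _
  have hf := psiN_sq_le hn hy hy1
  have hg := deriv_psiN_sq_le hn hy hy1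
  set W := (-y) ^ (-(3 : ℝ) / 2)
  have hwronskian : (psiN n y ^ 2 + deriv (psiN n) y ^ 2) / (x - y) ^ 2 ≤
      64 * Real.exp 12 * (|x| + 1) ^ 2 * W := by
    rw [div_le_iff₀ (pow_pos hsub 2)]
    calc psiN n y ^ 2 + deriv (psiN n) y ^ 2
        ≤ 32 * Real.exp 12 * ((-y) ^ 2 * W) + 32 * Real.exp 12 * ((-y) ^ 2 * W) := by
          refine add_le_add (hf.trans ?_) hg
          gcongr
          exact le_self_pow₀ (by linarith) two_ne_zero
      _ = 64 * Real.exp 12 * W * (-y) ^ 2 := by ring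
      _ ≤ 64 * Real.exp 12 * W * ((|x| + 1) * (x - y)) ^ 2 := by
          gcongr
          exact neg_le_mul_sub hxy.le
      _ = 64 * Real.exp 12 * (|x| + 1) ^ 2 * W * (x - y) ^ 2 := by ring
  have hproduct : psiN n y ^ 2 / (2 * (n : ℝ) ^ ((1 : ℝ) / 3)) ^ 2 ≤
      16 * Real.exp 12 * (|x| + 1) ^ 2 * W := by
    rw [div_le_iff₀ (by positivity)]
    calc psiN n y ^ 2 ≤ 32 * Real.exp 12 * (2 * ((n : ℝ) ^ ((1 : ℝ) / 3)) ^ 2 * W) := by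
          refine hf.trans ?_
          gcongr
          linarith
      _ = 16 * Real.exp 12 * 1 * W * (2 * (n : ℝ) ^ ((1 : ℝ) / 3)) ^ 2 := by ring
      _ ≤ 16 * Real.exp 12 * (|x| + 1) ^ 2 * W * (2 * (n : ℝ) ^ ((1 : ℝ) / 3)) ^ 2 := by
          gcongr
          exact one_le_pow₀ (by linarith)
  refine (KAiN_sq_le n (sub_pos.1 hsub).ne').trans ?_
  refine (mul_le_mul_of_nonneg_left (add_le_add hwronskian hproduct) (by positivity)).trans_eq ?_
  ring

lemma sq_add_sq_psiN_le_mul_KAiN_self (hn : 1 ≤ n)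
    (hx : 1280 * (|x| + 2) ^ 3 ≤ (n : ℝ) ^ ((1 : ℝ) / 3)) :
    psiN n x ^ 2 + deriv (psiN n) x ^ 2 ≤ 2 * (1280 * (|x| + 2) ^ 3) * KAiN n x x := by
  have hx0 := abs_nonneg x
  have hxσ : |x| ≤ ((n : ℝ) ^ ((1 : ℝ) / 3)) ^ 2 :=
    calc |x| ≤ (|x| + 2) ^ 3 :=
          (le_add_of_nonneg_right zero_le_two).trans (le_self_pow₀ (by linarith) three_ne_zero)
      _ ≤ (n : ℝ) ^ ((1 : ℝ) / 3) := by linarith [pow_nonneg (add_nonneg hx0 zero_le_two) 3]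
      _ ≤ ((n : ℝ) ^ ((1 : ℝ) / 3)) ^ 2 := le_self_pow₀ (one_le_rpow_third hn) two_ne_zero
  have henergy := (isSchrodingerSolution_psiN hn).sq_add_sq_le_energy_edgePotential
    (one_le_rpow_third hn) hxσ (energy_psiN_nonneg hn)
  have hT : 0 < 1280 * (|x| + 2) ^ 3 := by positivity
  set T := 1280 * (|x| + 2) ^ 3
  have hcorrection : 1 / (2 * (n : ℝ) ^ ((1 : ℝ) / 3)) * psiN n x ^ 2 ≤
      1 / (2 * T) * (psiN n x ^ 2 + deriv (psiN n) x ^ 2) := by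
    gcongr
    exact le_add_of_nonneg_right (sq_nonneg _)
  have hlower : 1 / (2 * T) * (psiN n x ^ 2 + deriv (psiN n) x ^ 2) ≤ KAiN n x x := by
    rw [KAiN_self hn]
    have hhalf : 1 / (2 * T) = 1 / T / 2 := by rw [mul_comm, div_mul_eq_div_div]
    rw [hhalf] at hcorrection ⊢
    linarith
  rwa [one_div, inv_mul_le_iff₀ (by positivity)] at hlower

lemma KAiN_sq_div_le_of_le_rpow (hn : 1 ≤ n) (hx : 1280 * (|x| + 2) ^ 3 ≤ (n : ℝ) ^ ((1 : ℝ) / 3))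
    (hy : -(2 * ((n : ℝ) ^ ((1 : ℝ) / 3)) ^ 2) ≤ y) (hxy : |x| + 1 < -y) :
    KAiN n x y ^ 2 / KAiN n x x ≤
      320 * Real.exp 12 * (|x| + 1) ^ 2 * (1280 * (|x| + 2) ^ 3) * (-y) ^ (-(3 : ℝ) / 2) := by
  have hy0 : 0 < -y := by linarith [abs_nonneg x]
  rw [div_le_iff₀ (KAiN_self_pos hn x)]
  refine (KAiN_sq_le_of_lt_neg hn hy hxy).trans ?_
  refine (mul_le_mul_of_nonneg_left (sq_add_sq_psiN_le_mul_KAiN_self hn hx)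
    (by positivity)).trans_eq ?_
  ring

end KernelDecay

/-- positivity of the diagonal of the finite-`n` Airy kernel and decay of the
Palm-correction term `K_Aiⁿ(x,y)²/K_Aiⁿ(x,x)`. -/
theorem palm_correction_decay (x : ℝ) :
    (∀ n : ℕ, 1 ≤ n → 0 < KAiN n x x) ∧
    ∃ C : ℝ, 0 < C ∧ ∀ n : ℕ, 1 ≤ n → ∀ y : ℝ,
      -(2 * (n : ℝ) ^ ((2:ℝ)/3)) ≤ y → |x| + 1 < |y| →
      (KAiN n x y) ^ 2 / KAiN n x x ≤ C * |y| ^ (-(3:ℝ)/2) := by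
  set T := 1280 * (|x| + 2) ^ 3
  have hx0 := abs_nonneg x
  refine ⟨fun n hn => KAiN_self_pos hn x, 128 * Real.exp 18 + 128 * Real.exp 12 * T ^ 4 +
    320 * Real.exp 12 * (|x| + 1) ^ 2 * T, by positivity, fun n hn y hy hxy => ?_⟩
  rw [show (2 : ℝ) / 3 = 1 / 3 * (2 : ℕ) by norm_num, Real.rpow_mul_natCast n.cast_nonneg] at hy
  rw [add_mul, add_mul]
  have hright : 0 ≤ 128 * Real.exp 18 * |y| ^ (-(3 : ℝ) / 2) := by positivity
  have hsmall : 0 ≤ 128 * Real.exp 12 * T ^ 4 * |y| ^ (-(3 : ℝ) / 2) := by positivity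
  have hlarge : 0 ≤ 320 * Real.exp 12 * (|x| + 1) ^ 2 * T * |y| ^ (-(3 : ℝ) / 2) := by positivity
  obtain hy0 | hy0 := le_total 0 y
  · rw [abs_of_nonneg hy0] at hxy hright hsmall hlarge ⊢
    linarith [KAiN_sq_div_le_of_one_le hn x (y := y) (by linarith)]
  rw [abs_of_nonpos hy0] at hxy hright hsmall hlarge ⊢
  obtain hT | hT := le_total ((n : ℝ) ^ ((1 : ℝ) / 3)) T
  · linarith [KAiN_sq_div_le_of_rpow_le hn hT x hy (by linarith)]
  · linarith [KAiN_sq_div_le_of_le_rpow hn hT hy hxy]
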